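/- arXiv:2210.16150 — 3 statements merged into one kernel-verified Lean document; each statement's English description precedes it below -/
import Mathlib

section
/- Let u, v ∈ ℝ² be linearly independent and let P = {s·u + t·v : s, t ∈ [-1,1]} be the parallelogram with center at the origin spanned by u and v. If a, b, c ∈ P are points with a + b + c = 0 (so that the triangle conv{a,b,c} has its centroid at the centroid of P), and λ > 0 is such that P ⊆ λ·conv{a,b,c}, then λ ≥ 5/2. -/
open Pointwise

/-- Both coordinates single out the same vertex by its sign. -/
lemma cross_le_of_same_sign_pattern {x₁ x₂ x₃ y₁ y₂ y₃ M : ℝ}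
    (hx : x₁ + x₂ + x₃ = 0) (hy : y₁ + y₂ + y₃ = 0)
    (hx₁ : x₁ ≤ 1) (hy₁ : y₁ ≤ 1)
    (hx₂ : x₂ ≤ 0) (hx₃ : x₃ ≤ 0) (hy₂ : y₂ ≤ 0) (hy₃ : y₃ ≤ 0)
    (h₁₂ : |x₁ - x₂| + |y₁ - y₂| ≤ M) (h₁₃ : |x₁ - x₃| + |y₁ - y₃| ≤ M) :
    5 / 2 * |x₁ * y₂ - x₂ * y₁| ≤ M := by
  have e₁ := le_abs_self (x₁ - x₂)
  have e₂ := le_abs_self (y₁ - y₂)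
  have e₃ := le_abs_self (x₁ - x₃)
  have e₄ := le_abs_self (y₁ - y₃)
  obtain rfl : x₁ = -x₂ - x₃ := by linarith
  obtain rfl : y₁ = -y₂ - y₃ := by linarith
  have m₁ := mul_nonneg_of_nonpos_of_nonpos hx₂ hy₃
  have m₂ := mul_nonneg_of_nonpos_of_nonpos hx₃ hy₂
  have b₁ : x₂ * y₃ ≤ -x₂ := by nlinarith
  have b₂ : x₂ * y₃ ≤ -y₃ := by nlinarith
  have b₃ : x₃ * y₂ ≤ -x₃ := by nlinarith
  have b₄ : x₃ * y₂ ≤ -y₂ := by nlinarith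
  have hD : |(-x₂ - x₃) * y₂ - x₂ * (-y₂ - y₃)| ≤ x₂ * y₃ + x₃ * y₂ := by
    rw [abs_le]; constructor <;> nlinarith
  linarith

/-- The coordinates single out different vertices by their signs. -/
lemma cross_le_of_different_sign_pattern {x₁ x₂ x₃ y₁ y₂ y₃ M : ℝ}
    (hx : x₁ + x₂ + x₃ = 0) (hy : y₁ + y₂ + y₃ = 0)
    (hx₁ : x₁ ≤ 1) (hy₂ : y₂ ≤ 1)
    (hx₂ : x₂ ≤ 0) (hx₃ : x₃ ≤ 0) (hy₁ : y₁ ≤ 0) (hy₃ : y₃ ≤ 0)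
    (h₁₂ : |x₁ - x₂| + |y₁ - y₂| ≤ M) (h₁₃ : |x₁ - x₃| + |y₁ - y₃| ≤ M)
    (h₂₃ : |x₂ - x₃| + |y₂ - y₃| ≤ M) :
    5 / 2 * |x₁ * y₂ - x₂ * y₁| ≤ M := by
  have e₁ := le_abs_self (x₁ - x₂)
  have e₂ := neg_abs_le (y₁ - y₂)
  have e₃ := le_abs_self (x₁ - x₃)
  have e₄ := le_abs_self (y₁ - y₃)
  have e₅ := le_abs_self (x₂ - x₃)
  have e₆ := le_abs_self (y₂ - y₃)
  obtain ⟨p, rfl⟩ : ∃ p, x₂ = -p := ⟨-x₂, by ring⟩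
  obtain ⟨r, rfl⟩ : ∃ r, y₁ = -r := ⟨-y₁, by ring⟩
  obtain rfl : x₃ = p - x₁ := by linarith
  obtain rfl : y₃ = r - y₂ := by linarith
  have hp : 0 ≤ p := by linarith
  have hr : 0 ≤ r := by linarith
  have hpx : p ≤ x₁ := by linarith
  have hry : r ≤ y₂ := by linarith
  have b₁ : x₁ * y₂ ≤ x₁ := by nlinarith
  have b₂ : x₁ * y₂ ≤ y₂ := by nlinarith
  have hD : |x₁ * y₂ - -p * -r| = x₁ * y₂ - p * r := by
    rw [abs_of_nonneg] <;> nlinarith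
  rw [hD]
  rcases le_total (1 / 5) p with h | h
  · nlinarith [mul_nonneg hr (sub_nonneg.2 h)]
  rcases le_total (1 / 5) r with h' | h'
  · nlinarith [mul_nonneg hp (sub_nonneg.2 h')]
  · have k : 5 / 2 * (x₁ * y₂ - p * r) ≤ 3 / 2 * (x₁ + y₂) - 3 / 2 * (p + r) := by
      rcases le_total y₂ (3 / 5) with g | g
      · nlinarith [mul_nonneg (sub_nonneg.2 hpx) (sub_nonneg.2 g),
          mul_nonneg hp (sub_nonneg.2 h'), mul_nonneg hp (sub_nonneg.2 hry)]
      · nlinarith [mul_nonneg (sub_nonneg.2 hx₁) (sub_nonneg.2 g),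
          mul_nonneg (sub_nonneg.2 h) (sub_nonneg.2 h')]
    linarith

lemma two_nonpos_or_two_nonneg (y₁ y₂ y₃ : ℝ) :
    (y₂ ≤ 0 ∧ y₃ ≤ 0) ∨ (y₁ ≤ 0 ∧ y₃ ≤ 0) ∨ (y₁ ≤ 0 ∧ y₂ ≤ 0) ∨
    (0 ≤ y₂ ∧ 0 ≤ y₃) ∨ (0 ≤ y₁ ∧ 0 ≤ y₃) ∨ (0 ≤ y₁ ∧ 0 ≤ y₂) := by
  rcases le_total y₁ 0 with h₁ | h₁ <;> rcases le_total y₂ 0 with h₂ | h₂ <;>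
    rcases le_total y₃ 0 with h₃ | h₃ <;> simp [*]

lemma cross_le_of_sign_pattern {x₁ x₂ x₃ y₁ y₂ y₃ M : ℝ}
    (hx : x₁ + x₂ + x₃ = 0) (hy : y₁ + y₂ + y₃ = 0)
    (hx₁ : x₁ ≤ 1) (hx₂ : x₂ ≤ 0) (hx₃ : x₃ ≤ 0)
    (hy₁ : |y₁| ≤ 1) (hy₂ : |y₂| ≤ 1) (hy₃ : |y₃| ≤ 1)
    (h₁₂ : |x₁ - x₂| + |y₁ - y₂| ≤ M) (h₁₃ : |x₁ - x₃| + |y₁ - y₃| ≤ M)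
    (h₂₃ : |x₂ - x₃| + |y₂ - y₃| ≤ M) :
    5 / 2 * |x₁ * y₂ - x₂ * y₁| ≤ M := by
  have of_nonpos : ∀ {y₁ y₂ y₃ : ℝ}, y₁ + y₂ + y₃ = 0 → |y₁| ≤ 1 → |y₂| ≤ 1 → |y₃| ≤ 1 →
      |x₁ - x₂| + |y₁ - y₂| ≤ M → |x₁ - x₃| + |y₁ - y₃| ≤ M → |x₂ - x₃| + |y₂ - y₃| ≤ M →
      ((y₂ ≤ 0 ∧ y₃ ≤ 0) ∨ (y₁ ≤ 0 ∧ y₃ ≤ 0) ∨ (y₁ ≤ 0 ∧ y₂ ≤ 0)) →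
      5 / 2 * |x₁ * y₂ - x₂ * y₁| ≤ M := by
    intro y₁ y₂ y₃ hy hy₁ hy₂ hy₃ h₁₂ h₁₃ h₂₃ h
    rcases h with ⟨h, h'⟩ | ⟨h, h'⟩ | ⟨h, h'⟩
    · exact cross_le_of_same_sign_pattern hx hy hx₁ (abs_le.1 hy₁).2 hx₂ hx₃ h h' h₁₂ h₁₃
    · exact cross_le_of_different_sign_pattern hx hy hx₁ (abs_le.1 hy₂).2 hx₂ hx₃ h h' h₁₂ h₁₃ h₂₃
    · rw [abs_sub_comm x₂, abs_sub_comm y₂] at h₂₃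
      have key := cross_le_of_different_sign_pattern (by linarith) (by linarith) hx₁
        (abs_le.1 hy₃).2 hx₃ hx₂ h h' h₁₃ h₁₂ h₂₃
      rwa [show x₁ * y₃ - x₃ * y₁ = -(x₁ * y₂ - x₂ * y₁) by
        linear_combination x₁ * hy - y₁ * hx, abs_neg] at key
  have hneg : ∀ s t : ℝ, |(-s) - (-t)| = |s - t| := fun s t => by
    rw [neg_sub_neg, abs_sub_comm]
  rcases two_nonpos_or_two_nonneg y₁ y₂ y₃ with h | h | h | h | h | h
  · exact of_nonpos hy hy₁ hy₂ hy₃ h₁₂ h₁₃ h₂₃ (by tauto)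
  · exact of_nonpos hy hy₁ hy₂ hy₃ h₁₂ h₁₃ h₂₃ (by tauto)
  · exact of_nonpos hy hy₁ hy₂ hy₃ h₁₂ h₁₃ h₂₃ (by tauto)
  all_goals
    have key := of_nonpos (y₁ := -y₁) (y₂ := -y₂) (y₃ := -y₃) (by linarith) (by rwa [abs_neg])
      (by rwa [abs_neg]) (by rwa [abs_neg]) (by rwa [hneg]) (by rwa [hneg]) (by rwa [hneg])
      (by simp only [neg_nonpos]; tauto)
    rwa [show x₁ * -y₂ - x₂ * -y₁ = -(x₁ * y₂ - x₂ * y₁) by ring, abs_neg] at key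

/-- A triangle in the square `[-1, 1]²` with centroid at the origin has a side whose `ℓ¹`-length
is at least `5 / 2` times the cross product of two of its vertices. -/
lemma cross_le_of_sides_le {x₁ x₂ x₃ y₁ y₂ y₃ M : ℝ}
    (hx : x₁ + x₂ + x₃ = 0) (hy : y₁ + y₂ + y₃ = 0)
    (hx₁ : |x₁| ≤ 1) (hx₂ : |x₂| ≤ 1) (hx₃ : |x₃| ≤ 1)
    (hy₁ : |y₁| ≤ 1) (hy₂ : |y₂| ≤ 1) (hy₃ : |y₃| ≤ 1)
    (h₁₂ : |x₁ - x₂| + |y₁ - y₂| ≤ M) (h₁₃ : |x₁ - x₃| + |y₁ - y₃| ≤ M)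
    (h₂₃ : |x₂ - x₃| + |y₂ - y₃| ≤ M) :
    5 / 2 * |x₁ * y₂ - x₂ * y₁| ≤ M := by
  have of_nonpos : ∀ {x₁ x₂ x₃ : ℝ}, x₁ + x₂ + x₃ = 0 → |x₁| ≤ 1 → |x₂| ≤ 1 → |x₃| ≤ 1 →
      |x₁ - x₂| + |y₁ - y₂| ≤ M → |x₁ - x₃| + |y₁ - y₃| ≤ M → |x₂ - x₃| + |y₂ - y₃| ≤ M →
      ((x₂ ≤ 0 ∧ x₃ ≤ 0) ∨ (x₁ ≤ 0 ∧ x₃ ≤ 0) ∨ (x₁ ≤ 0 ∧ x₂ ≤ 0)) →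
      5 / 2 * |x₁ * y₂ - x₂ * y₁| ≤ M := by
    intro x₁ x₂ x₃ hx hx₁ hx₂ hx₃ h₁₂ h₁₃ h₂₃ h
    have h₂₁ := h₁₂
    have h₃₁ := h₁₃
    have h₃₂ := h₂₃
    rw [abs_sub_comm x₁, abs_sub_comm y₁] at h₂₁ h₃₁
    rw [abs_sub_comm x₂, abs_sub_comm y₂] at h₃₂
    rcases h with ⟨h, h'⟩ | ⟨h, h'⟩ | ⟨h, h'⟩
    · exact cross_le_of_sign_pattern hx hy (abs_le.1 hx₁).2 h h' hy₁ hy₂ hy₃ h₁₂ h₁₃ h₂₃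
    · have key := cross_le_of_sign_pattern (by linarith) (by linarith) (abs_le.1 hx₂).2 h h'
        hy₂ hy₁ hy₃ h₂₁ h₂₃ h₁₃
      rwa [abs_sub_comm] at key
    · have key := cross_le_of_sign_pattern (by linarith) (by linarith) (abs_le.1 hx₃).2 h h'
        hy₃ hy₁ hy₂ h₃₁ h₃₂ h₁₂
      rwa [show x₃ * y₁ - x₁ * y₃ = x₁ * y₂ - x₂ * y₁ by
        linear_combination y₁ * hx - x₁ * hy] at key
  have hneg : ∀ s t : ℝ, |(-s) - (-t)| = |s - t| := fun s t => by
    rw [neg_sub_neg, abs_sub_comm]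
  rcases two_nonpos_or_two_nonneg x₁ x₂ x₃ with h | h | h | h | h | h
  · exact of_nonpos hx hx₁ hx₂ hx₃ h₁₂ h₁₃ h₂₃ (by tauto)
  · exact of_nonpos hx hx₁ hx₂ hx₃ h₁₂ h₁₃ h₂₃ (by tauto)
  · exact of_nonpos hx hx₁ hx₂ hx₃ h₁₂ h₁₃ h₂₃ (by tauto)
  all_goals
    have key := of_nonpos (x₁ := -x₁) (x₂ := -x₂) (x₃ := -x₃) (by linarith) (by rwa [abs_neg])
      (by rwa [abs_neg]) (by rwa [abs_neg]) (by rwa [hneg]) (by rwa [hneg]) (by rwa [hneg])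
      (by simp only [neg_nonpos]; tauto)
    rwa [show -x₁ * y₂ - -x₂ * y₁ = -(x₁ * y₂ - x₂ * y₁) by ring, abs_neg] at key

/-- If the triangle with centroid at the origin, scaled by `lam`, covers the square `[-1, 1]²`,
then its sides are short compared with the cross product of its vertices. -/
lemma side_le_of_square_covered {x₁ x₂ x₃ y₁ y₂ y₃ lam : ℝ} (hlam : 0 < lam)
    (hx : x₁ + x₂ + x₃ = 0) (hy : y₁ + y₂ + y₃ = 0)
    (hcov : ∀ s t : ℝ, |s| ≤ 1 → |t| ≤ 1 → ∃ α β γ : ℝ, 0 ≤ α ∧ 0 ≤ β ∧ 0 ≤ γ ∧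
      α + β + γ = 1 ∧ s = lam * (α * x₁ + β * x₂ + γ * x₃) ∧
      t = lam * (α * y₁ + β * y₂ + γ * y₃)) :
    |x₁ - x₂| + |y₁ - y₂| ≤ lam * |x₁ * y₂ - x₂ * y₁| := by
  obtain rfl : x₃ = -x₁ - x₂ := by linarith
  obtain rfl : y₃ = -y₁ - y₂ := by linarith
  have bound : ∀ s t : ℝ, |s| ≤ 1 → |t| ≤ 1 →
      (x₁ - x₂) * t - (y₁ - y₂) * s ≤ lam * |x₁ * y₂ - x₂ * y₁| := by
    intro s t hs ht
    rcases le_total 0 (x₁ * y₂ - x₂ * y₁) with hD | hD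
    · obtain ⟨α, β, γ, -, -, hγ, hsum, hs', ht'⟩ := hcov s t hs ht
      rw [abs_of_nonneg hD]
      have e : (x₁ - x₂) * t - (y₁ - y₂) * s
          = lam * (x₁ * y₂ - x₂ * y₁) - 3 * (lam * (γ * (x₁ * y₂ - x₂ * y₁))) := by
        rw [hs', ht', show α = 1 - β - γ by linarith]; ring
      have := mul_nonneg hlam.le (mul_nonneg hγ hD)
      linarith
    · obtain ⟨α, β, γ, -, -, hγ, hsum, hs', ht'⟩ :=
        hcov (-s) (-t) (by rwa [abs_neg]) (by rwa [abs_neg])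
      rw [abs_of_nonpos hD]
      have e : (x₁ - x₂) * -t - (y₁ - y₂) * -s
          = lam * (x₁ * y₂ - x₂ * y₁) - 3 * (lam * (γ * (x₁ * y₂ - x₂ * y₁))) := by
        rw [hs', ht', show α = 1 - β - γ by linarith]; ring
      have := mul_nonneg hlam.le (mul_nonneg hγ (neg_nonneg.2 hD))
      linarith
  have h₁ := bound 1 1 (by norm_num) (by norm_num)
  have h₂ := bound 1 (-1) (by norm_num) (by norm_num)
  have h₃ := bound (-1) 1 (by norm_num) (by norm_num)
  have h₄ := bound (-1) (-1) (by norm_num) (by norm_num)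
  rcases abs_cases (x₁ - x₂) with ⟨h, -⟩ | ⟨h, -⟩ <;>
    rcases abs_cases (y₁ - y₂) with ⟨h', -⟩ | ⟨h', -⟩ <;> rw [h, h'] <;> linarith

/-- The case of the square `[-1, 1]²`. -/
lemma five_halves_le_of_square_covered {x₁ x₂ x₃ y₁ y₂ y₃ lam : ℝ} (hlam : 0 < lam)
    (hx : x₁ + x₂ + x₃ = 0) (hy : y₁ + y₂ + y₃ = 0)
    (hx₁ : |x₁| ≤ 1) (hx₂ : |x₂| ≤ 1) (hx₃ : |x₃| ≤ 1)
    (hy₁ : |y₁| ≤ 1) (hy₂ : |y₂| ≤ 1) (hy₃ : |y₃| ≤ 1)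
    (hcov : ∀ s t : ℝ, |s| ≤ 1 → |t| ≤ 1 → ∃ α β γ : ℝ, 0 ≤ α ∧ 0 ≤ β ∧ 0 ≤ γ ∧
      α + β + γ = 1 ∧ s = lam * (α * x₁ + β * x₂ + γ * x₃) ∧
      t = lam * (α * y₁ + β * y₂ + γ * y₃)) :
    5 / 2 ≤ lam := by
  have h₁₂ := side_le_of_square_covered hlam hx hy hcov
  have h₁₃ : |x₁ - x₃| + |y₁ - y₃| ≤ lam * |x₁ * y₂ - x₂ * y₁| := by
    have := side_le_of_square_covered (x₁ := x₁) (x₂ := x₃) (x₃ := x₂) (y₁ := y₁) (y₂ := y₃)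
      (y₃ := y₂) hlam (by linarith) (by linarith) fun s t hs ht => by
        obtain ⟨α, β, γ, hα, hβ, hγ, hsum, hs', ht'⟩ := hcov s t hs ht
        exact ⟨α, γ, β, hα, hγ, hβ, by linarith, by rw [hs']; ring, by rw [ht']; ring⟩
    rwa [show x₁ * y₃ - x₃ * y₁ = -(x₁ * y₂ - x₂ * y₁) by
      linear_combination x₁ * hy - y₁ * hx, abs_neg] at this
  have h₂₃ : |x₂ - x₃| + |y₂ - y₃| ≤ lam * |x₁ * y₂ - x₂ * y₁| := by
    have := side_le_of_square_covered (x₁ := x₂) (x₂ := x₃) (x₃ := x₁) (y₁ := y₂) (y₂ := y₃)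
      (y₃ := y₁) hlam (by linarith) (by linarith) fun s t hs ht => by
        obtain ⟨α, β, γ, hα, hβ, hγ, hsum, hs', ht'⟩ := hcov s t hs ht
        exact ⟨β, γ, α, hβ, hγ, hα, by linarith, by rw [hs']; ring, by rw [ht']; ring⟩
    rwa [show x₂ * y₃ - x₃ * y₂ = x₁ * y₂ - x₂ * y₁ by
      linear_combination x₂ * hy - y₂ * hx] at this
  have key := cross_le_of_sides_le hx hy hx₁ hx₂ hx₃ hy₁ hy₂ hy₃ h₁₂ h₁₃ h₂₃
  have hD : 0 < |x₁ * y₂ - x₂ * y₁| := by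
    refine (abs_nonneg _).lt_of_ne' fun h0 => ?_
    rw [h0, mul_zero] at h₁₂ h₁₃
    have e₂ := abs_nonpos_iff.1 (show |x₁ - x₂| ≤ 0 by linarith [abs_nonneg (y₁ - y₂)])
    have e₃ := abs_nonpos_iff.1 (show |x₁ - x₃| ≤ 0 by linarith [abs_nonneg (y₁ - y₃)])
    obtain ⟨α, β, γ, -, -, -, -, hs, -⟩ := hcov 1 1 (by norm_num) (by norm_num)
    rw [show x₁ = 0 by linarith, show x₂ = 0 by linarith, show x₃ = 0 by linarith] at hs
    norm_num at hs
  exact le_of_mul_le_mul_right key hD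

theorem parallelogram_triangle_centroid_lower_bound
    (u v : ℝ × ℝ) (huv : LinearIndependent ℝ ![u, v])
    (P : Set (ℝ × ℝ))
    (hP : P = {p : ℝ × ℝ | ∃ s ∈ Set.Icc (-1 : ℝ) 1, ∃ t ∈ Set.Icc (-1 : ℝ) 1,
      p = s • u + t • v})
    (a b c : ℝ × ℝ) (ha : a ∈ P) (hb : b ∈ P) (hc : c ∈ P)
    (hsum : a + b + c = 0)
    (lam : ℝ) (hlam : 0 < lam)
    (hsub : P ⊆ lam • convexHull ℝ {a, b, c}) :
    lam ≥ 5 / 2 := by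
  have hzero : ∀ s t : ℝ, s • u + t • v = 0 → s = 0 ∧ t = 0 := LinearIndependent.pair_iff.1 huv
  subst hP
  obtain ⟨x₁, hx₁, y₁, hy₁, rfl⟩ := ha
  obtain ⟨x₂, hx₂, y₂, hy₂, rfl⟩ := hb
  obtain ⟨x₃, hx₃, y₃, hy₃, rfl⟩ := hc
  obtain ⟨hx, hy⟩ := hzero (x₁ + x₂ + x₃) (y₁ + y₂ + y₃) (by rw [← hsum]; module)
  refine five_halves_le_of_square_covered hlam hx hy (abs_le.2 hx₁) (abs_le.2 hx₂) (abs_le.2 hx₃)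
    (abs_le.2 hy₁) (abs_le.2 hy₂) (abs_le.2 hy₃) fun s t hs ht => ?_
  obtain ⟨q, hq, hqe⟩ := hsub ⟨s, abs_le.1 hs, t, abs_le.1 ht, rfl⟩
  rw [convexHull_insert (Set.insert_nonempty _ _), convexHull_pair, mem_convexJoin] at hq
  obtain ⟨a', rfl, z, ⟨m, n, hm, hn, hmn, rfl⟩, α, β, hα, hβ, hαβ, rfl⟩ := hq
  refine ⟨α, β * m, β * n, hα, mul_nonneg hβ hm, mul_nonneg hβ hn, ?_, ?_⟩
  · rw [add_assoc, ← mul_add, hmn, mul_one, hαβ]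
  · obtain ⟨h, h'⟩ := hzero
      (lam * (α * x₁ + β * m * x₂ + β * n * x₃) - s)
      (lam * (α * y₁ + β * m * y₂ + β * n * y₃) - t) (by
        rw [← sub_eq_zero] at hqe
        rw [← hqe]
        module)
    exact ⟨by linarith, by linarith⟩
end

section
/- Let S = [-1,1] × [-1,1] ⊆ ℝ² be the square with vertices (±1, ±1). For every triangle Δ = conv{a,b,c} with a, b, c ∈ S and a + b + c = 0 (i.e., Δ ⊆ S with centroid at the center of S), the interior of the triangle (5/2)·Δ does not contain S. -/
open Pointwise

/-- The case in which the extreme vertices for the two coordinates are different. -/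
lemma false_of_lt_of_extreme_ne {u v s t : ℝ} (hu : 0 ≤ u) (hv : 0 ≤ v) (hs : 0 ≤ s)
    (ht : 0 ≤ t) (huv : u + v ≤ 1) (hst : s + t ≤ 1)
    (h₁ : (2 * u + v) + (2 * s + t) < 5 / 2 * (u * t + v * s + v * t))
    (h₂ : (u + 2 * v) + |t - s| < 5 / 2 * (u * t + v * s + v * t))
    (h₃ : |u - v| + (s + 2 * t) < 5 / 2 * (u * t + v * s + v * t)) : False := by
  have ht₁ := le_abs_self (t - s)
  have ht₂ := neg_le_abs (t - s)
  have hu₁ := le_abs_self (u - v)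
  have hu₂ := neg_le_abs (u - v)
  have e₁ : 0 < u * (t - 4 * s) := by
    nlinarith [mul_nonneg (add_nonneg hs ht) (sub_nonneg.2 huv),
      mul_nonneg (add_nonneg hu (add_nonneg hv hv)) (sub_nonneg.2 hst)]
  have e₂ : 0 < s * (v - 4 * u) := by
    nlinarith [mul_nonneg (add_nonneg hu hv) (sub_nonneg.2 hst),
      mul_nonneg (add_nonneg hs (add_nonneg ht ht)) (sub_nonneg.2 huv)]
  have f₁ : 0 < t - 4 * s := pos_of_mul_pos_right e₁ hu
  have f₂ : 0 < v - 4 * u := pos_of_mul_pos_right e₂ hs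
  have e₃ : (v - 2 * u) * (t - 2 * s) < 4 * (u * s) := by
    nlinarith [mul_nonneg hv (sub_nonneg.2 hst), mul_nonneg ht (sub_nonneg.2 huv)]
  have e₄ : 2 * u * (2 * s) ≤ (v - 2 * u) * (t - 2 * s) :=
    mul_le_mul (by linarith) (by linarith) (by linarith) (by linarith)
  linarith

/-- The case in which one vertex is extreme for both coordinates. -/
lemma false_of_lt_of_extreme_eq {u v s t : ℝ} (hu : 0 ≤ u) (hv : 0 ≤ v) (hs : 0 ≤ s)
    (ht : 0 ≤ t) (huv : u + v ≤ 1) (hst : s + t ≤ 1)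
    (h₁ : (2 * u + v) + (2 * s + t) < 5 / 2 * |u * t - v * s|)
    (h₂ : (u + 2 * v) + (s + 2 * t) < 5 / 2 * |u * t - v * s|) : False := by
  have hut := mul_nonneg hu ht
  have hvs := mul_nonneg hv hs
  have h := add_lt_add h₁ h₂
  have key : |u * t - v * s| ≤ u * t + v * s :=
    abs_le.2 ⟨by linarith, by linarith⟩
  nlinarith [mul_nonneg hu (sub_nonneg.2 hst), mul_nonneg ht (sub_nonneg.2 huv),
    mul_nonneg hv (sub_nonneg.2 hst), mul_nonneg hs (sub_nonneg.2 huv), mul_nonneg hu hs,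
    mul_nonneg hv ht]

lemma false_of_side_lt_of_first_extreme {x₁ x₂ x₃ y₁ y₂ y₃ : ℝ}
    (hx : x₁ + x₂ + x₃ = 0) (hy : y₁ + y₂ + y₃ = 0)
    (hx₁ : |x₁| ≤ 1) (hx₂ : x₂ ≤ 0) (hx₃ : x₃ ≤ 0)
    (hy₁ : |y₁| ≤ 1) (hy₂ : |y₂| ≤ 1) (hy₃ : |y₃| ≤ 1)
    (h₁ : |x₂ - x₃| + |y₂ - y₃| < 5 / 2 * |x₁ * y₂ - x₂ * y₁|)
    (h₂ : |x₃ - x₁| + |y₃ - y₁| < 5 / 2 * |x₁ * y₂ - x₂ * y₁|)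
    (h₃ : |x₁ - x₂| + |y₁ - y₂| < 5 / 2 * |x₁ * y₂ - x₂ * y₁|) : False := by
  wlog hy₁' : 0 ≤ y₁ generalizing y₁ y₂ y₃ with H
  · have e : |x₁ * -y₂ - x₂ * -y₁| = |x₁ * y₂ - x₂ * y₁| := by
      rw [← abs_neg]; congr 1; ring
    have n (p q : ℝ) : |-p - -q| = |p - q| := by rw [← abs_neg]; congr 1; ring
    refine H (y₁ := -y₁) (y₂ := -y₂) (y₃ := -y₃) (by linarith) ?_ ?_ ?_ ?_ ?_ ?_ (by linarith) <;>
      simpa only [e, n, abs_neg]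
  obtain rfl : x₁ = -x₂ - x₃ := by linarith
  obtain rfl : y₁ = -y₂ - y₃ := by linarith
  rw [abs_le] at hx₁ hy₁ hy₂ hy₃
  have hD : (-x₂ - x₃) * y₂ - x₂ * (-y₂ - y₃) = x₂ * y₃ - x₃ * y₂ := by ring
  rw [hD] at h₁ h₂ h₃
  have a₁ := neg_le_abs (x₃ - (-x₂ - x₃))
  have a₂ := le_abs_self (-x₂ - x₃ - x₂)
  have b₁ := neg_le_abs (y₃ - (-y₂ - y₃))
  have b₂ := le_abs_self (-y₂ - y₃ - y₂)
  have b₃ := le_abs_self (y₂ - y₃)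
  have b₄ := neg_le_abs (y₂ - y₃)
  rcases le_total y₂ 0 with k₂ | k₂ <;> rcases le_total y₃ 0 with k₃ | k₃
  · refine false_of_lt_of_extreme_eq (u := -x₂) (v := -x₃) (s := -y₂) (t := -y₃)
      (by linarith) (by linarith) (by linarith) (by linarith) (by linarith) (by linarith) ?_ ?_ <;>
    · simp only [neg_mul_neg]
      linarith
  · have e : |x₂ * y₃ - x₃ * y₂| = -(x₂ * y₃ - x₃ * y₂) := abs_of_nonpos (by nlinarith)
    have e' : |x₂ - x₃| = |-x₂ - -x₃| := by rw [← abs_neg]; congr 1; ring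
    rw [e] at h₁ h₂ h₃
    rw [e'] at h₁
    exact false_of_lt_of_extreme_ne (u := -x₂) (v := -x₃) (s := -y₂ - y₃) (t := y₃)
      (by linarith) (by linarith) hy₁' k₃ (by linarith) (by linarith)
      (by linarith) (by linarith) (by linarith)
  · have e : |x₂ * y₃ - x₃ * y₂| = x₂ * y₃ - x₃ * y₂ := abs_of_nonneg (by nlinarith)
    have e' : |-y₂ - y₃ - y₂| = |y₂ - (-y₂ - y₃)| := abs_sub_comm _ _
    have e'' : |x₂ - x₃| = |-x₃ - -x₂| := by congr 1; ring
    rw [e] at h₁ h₂ h₃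
    rw [e''] at h₁
    rw [e'] at h₃
    exact false_of_lt_of_extreme_ne (u := -x₃) (v := -x₂) (s := -y₂ - y₃) (t := y₂)
      (by linarith) (by linarith) hy₁' k₂ (by linarith) (by linarith)
      (by linarith) (by linarith) (by linarith)
  · obtain rfl : y₂ = 0 := by linarith
    obtain rfl : y₃ = 0 := by linarith
    simp only [mul_zero, sub_zero, abs_zero] at h₁
    linarith [abs_nonneg (x₂ - x₃)]

lemma false_of_side_lt {x₁ x₂ x₃ y₁ y₂ y₃ : ℝ}
    (hx : x₁ + x₂ + x₃ = 0) (hy : y₁ + y₂ + y₃ = 0)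
    (hx₁ : |x₁| ≤ 1) (hx₂ : |x₂| ≤ 1) (hx₃ : |x₃| ≤ 1)
    (hy₁ : |y₁| ≤ 1) (hy₂ : |y₂| ≤ 1) (hy₃ : |y₃| ≤ 1)
    (h₁ : |x₂ - x₃| + |y₂ - y₃| < 5 / 2 * |x₁ * y₂ - x₂ * y₁|)
    (h₂ : |x₃ - x₁| + |y₃ - y₁| < 5 / 2 * |x₁ * y₂ - x₂ * y₁|)
    (h₃ : |x₁ - x₂| + |y₁ - y₂| < 5 / 2 * |x₁ * y₂ - x₂ * y₁|) : False := by
  wlog hneg : x₁ ≤ 0 ∧ x₂ ≤ 0 ∨ x₂ ≤ 0 ∧ x₃ ≤ 0 ∨ x₃ ≤ 0 ∧ x₁ ≤ 0 generalizing x₁ x₂ x₃ with H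
  · have e : |-x₁ * y₂ - -x₂ * y₁| = |x₁ * y₂ - x₂ * y₁| := by
      rw [← abs_neg]; congr 1; ring
    have n (p q : ℝ) : |-p - -q| = |p - q| := by rw [← abs_neg]; congr 1; ring
    refine H (x₁ := -x₁) (x₂ := -x₂) (x₃ := -x₃) (by linarith) ?_ ?_ ?_ ?_ ?_ ?_ ?_
    any_goals simpa only [e, n, abs_neg]
    simp only [neg_nonpos]
    grind
  have e₁ : x₁ * y₂ - x₂ * y₁ = x₂ * y₃ - x₃ * y₂ := by
    linear_combination y₂ * hx - x₂ * hy
  have e₂ : x₁ * y₂ - x₂ * y₁ = x₃ * y₁ - x₁ * y₃ := by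
    linear_combination x₁ * hy - y₁ * hx
  rcases hneg with ⟨k₁, k₂⟩ | ⟨k₂, k₃⟩ | ⟨k₃, k₁⟩
  · rw [e₂] at h₁ h₂ h₃
    exact false_of_side_lt_of_first_extreme (by linarith) (by linarith) hx₃ k₁ k₂ hy₃ hy₁ hy₂
      h₃ h₁ h₂
  · exact false_of_side_lt_of_first_extreme hx hy hx₁ k₂ k₃ hy₁ hy₂ hy₃ h₁ h₂ h₃
  · rw [e₁] at h₁ h₂ h₃
    exact false_of_side_lt_of_first_extreme (by linarith) (by linarith) hx₂ k₃ k₁ hy₂ hy₃ hy₁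
      h₂ h₃ h₁

/-- A lower bound for a nonzero linear functional on a set is strict on the interior. -/
lemma lt_of_mem_interior_of_forall_le {K : Set (ℝ × ℝ)} {p : ℝ × ℝ} {α β m : ℝ}
    (hp : p ∈ interior K) (hne : α ≠ 0 ∨ β ≠ 0)
    (hK : ∀ q ∈ K, m ≤ α * q.1 + β * q.2) : m < α * p.1 + β * p.2 := by
  have hpos : 0 < α ^ 2 + β ^ 2 := by
    rcases hne with h | h <;> positivity
  have hcont : ContinuousAt (fun t : ℝ => (p.1 - t * α, p.2 - t * β)) 0 := by fun_prop
  have hev : ∀ᶠ t in nhds (0 : ℝ), (p.1 - t * α, p.2 - t * β) ∈ K := by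
    refine hcont.eventually_mem ?_
    simpa using mem_interior_iff_mem_nhds.1 hp
  obtain ⟨ε, hε, hball⟩ := Metric.eventually_nhds_iff.1 hev
  have hmem := hK _ (hball (y := ε / 2) (by
    rw [Real.dist_eq, sub_zero, abs_of_pos (by positivity)]; linarith))
  have := mul_pos (half_pos hε) hpos
  dsimp only at hmem
  linarith

lemma le_of_mem_smul_convexHull_triple {a b c q : ℝ × ℝ} {r α β m : ℝ} (hr : 0 ≤ r)
    (ha : m ≤ α * a.1 + β * a.2) (hb : m ≤ α * b.1 + β * b.2) (hc : m ≤ α * c.1 + β * c.2)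
    (hq : q ∈ r • convexHull ℝ {a, b, c}) : r * m ≤ α * q.1 + β * q.2 := by
  obtain ⟨z, hz, rfl⟩ := hq
  have hconv : Convex ℝ {z : ℝ × ℝ | m ≤ α * z.1 + β * z.2} := by
    refine convex_halfSpace_ge (f := fun z : ℝ × ℝ => α * z.1 + β * z.2) ?_ m
    constructor <;> intros <;> simp <;> ring
  have hsub : ({a, b, c} : Set (ℝ × ℝ)) ⊆ {z | m ≤ α * z.1 + β * z.2} := by
    rintro z (rfl | rfl | rfl) <;> assumption
  have hz' : m ≤ α * z.1 + β * z.2 := convexHull_min hsub hconv hz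
  have := mul_le_mul_of_nonneg_left hz' hr
  simp only [Prod.smul_fst, Prod.smul_snd, smul_eq_mul]
  linarith

lemma exists_mem_square_eq_neg_l1 (α β : ℝ) :
    ∃ p ∈ Set.Icc ((-1, -1) : ℝ × ℝ) (1, 1), α * p.1 + β * p.2 = -(|α| + |β|) := by
  have h (x : ℝ) : ∃ y, -1 ≤ y ∧ y ≤ 1 ∧ x * y = -|x| := by
    rcases le_total 0 x with hx | hx
    · exact ⟨-1, by norm_num, by norm_num, by rw [abs_of_nonneg hx]; ring⟩
    · exact ⟨1, by norm_num, by norm_num, by rw [abs_of_nonpos hx]; ring⟩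
  obtain ⟨y, h₁, h₂, h₃⟩ := h α
  obtain ⟨z, k₁, k₂, k₃⟩ := h β
  exact ⟨(y, z), ⟨⟨h₁, k₁⟩, ⟨h₂, k₂⟩⟩, by dsimp only; linarith⟩

lemma l1_lt_of_square_subset_interior {a b c : ℝ × ℝ} {r α β m : ℝ} (hr : 0 ≤ r)
    (hsub : Set.Icc ((-1, -1) : ℝ × ℝ) (1, 1) ⊆ interior (r • convexHull ℝ {a, b, c}))
    (hne : α ≠ 0 ∨ β ≠ 0)
    (ha : -m ≤ α * a.1 + β * a.2) (hb : -m ≤ α * b.1 + β * b.2)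
    (hc : -m ≤ α * c.1 + β * c.2) : |α| + |β| < r * m := by
  obtain ⟨p, hp, hpe⟩ := exists_mem_square_eq_neg_l1 α β
  have := lt_of_mem_interior_of_forall_le (hsub hp) hne
    fun q hq => le_of_mem_smul_convexHull_triple hr ha hb hc hq
  linarith

theorem square_not_subset_interior_of_homothetic_triangle
    (S : Set (ℝ × ℝ)) (hS : S = Set.Icc ((-1, -1) : ℝ × ℝ) (1, 1))
    (a b c : ℝ × ℝ) (ha : a ∈ S) (hb : b ∈ S) (hc : c ∈ S)
    (hsum : a + b + c = 0) :
    ¬ S ⊆ interior ((5 / 2 : ℝ) • convexHull ℝ {a, b, c}) := by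
  subst hS
  intro hsub
  wlog hD : 0 ≤ a.1 * b.2 - b.1 * a.2 generalizing b c with H
  · have h₁ : a.1 + b.1 + c.1 = 0 := congrArg Prod.fst hsum
    have h₂ : a.2 + b.2 + c.2 = 0 := congrArg Prod.snd hsum
    refine H c b (by rw [← hsum]; abel) hc hb (by rwa [Set.pair_comm c b]) ?_
    have : a.1 * c.2 - c.1 * a.2 = -(a.1 * b.2 - b.1 * a.2) := by
      linear_combination a.1 * h₂ - a.2 * h₁
    linarith
  obtain ⟨x₁, y₁⟩ := a
  obtain ⟨x₂, y₂⟩ := b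
  obtain ⟨x₃, y₃⟩ := c
  simp only [Prod.mk_add_mk, Prod.mk_eq_zero] at hsum
  obtain ⟨hx, hy⟩ := hsum
  obtain ⟨⟨ha₁, ha₂⟩, ⟨ha₃, ha₄⟩⟩ := ha
  obtain ⟨⟨hb₁, hb₂⟩, ⟨hb₃, hb₄⟩⟩ := hb
  obtain ⟨⟨hc₁, hc₂⟩, ⟨hc₃, hc₄⟩⟩ := hc
  dsimp only at *
  have e₁ : x₂ * y₃ - x₃ * y₂ = x₁ * y₂ - x₂ * y₁ := by
    linear_combination x₂ * hy - y₂ * hx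
  have e₂ : x₃ * y₁ - x₁ * y₃ = x₁ * y₂ - x₂ * y₁ := by
    linear_combination y₁ * hx - x₁ * hy
  have side {p q : ℝ} (hpq : p ≠ 0 ∨ q ≠ 0)
      (k₁ : -(x₁ * y₂ - x₂ * y₁) ≤ q * x₁ - p * y₁)
      (k₂ : -(x₁ * y₂ - x₂ * y₁) ≤ q * x₂ - p * y₂)
      (k₃ : -(x₁ * y₂ - x₂ * y₁) ≤ q * x₃ - p * y₃) :
      |p| + |q| < 5 / 2 * (x₁ * y₂ - x₂ * y₁) := by
    have := l1_lt_of_square_subset_interior (α := q) (β := -p) (m := x₁ * y₂ - x₂ * y₁)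
      (by norm_num) hsub (by rw [neg_ne_zero]; exact hpq.symm) (by dsimp only; linarith)
      (by dsimp only; linarith) (by dsimp only; linarith)
    rw [abs_neg] at this
    linarith
  have hpos : 0 < x₁ * y₂ - x₂ * y₁ := by
    refine hD.lt_of_ne fun h => ?_
    have contra {p q : ℝ} (k : |p| + |q| < 5 / 2 * (x₁ * y₂ - x₂ * y₁)) : False := by
      linarith [abs_nonneg p, abs_nonneg q]
    by_cases h₁ : x₁ ≠ 0 ∨ y₁ ≠ 0
    · exact contra (side h₁ (by linarith) (by linarith) (by linarith))
    by_cases h₂ : x₂ ≠ 0 ∨ y₂ ≠ 0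
    · exact contra (side h₂ (by linarith) (by linarith) (by linarith))
    push Not at h₁ h₂
    exact contra (side (p := 1) (q := 0) (by simp) (by linarith) (by linarith) (by linarith))
  have side' {p q : ℝ} (k₁ : -(x₁ * y₂ - x₂ * y₁) ≤ q * x₁ - p * y₁)
      (k₂ : -(x₁ * y₂ - x₂ * y₁) ≤ q * x₂ - p * y₂)
      (k₃ : -(x₁ * y₂ - x₂ * y₁) ≤ q * x₃ - p * y₃) :
      |p| + |q| < 5 / 2 * |x₁ * y₂ - x₂ * y₁| := by
    rw [abs_of_pos hpos]
    by_cases hpq : p ≠ 0 ∨ q ≠ 0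
    · exact side hpq k₁ k₂ k₃
    · push Not at hpq
      rw [hpq.1, hpq.2, abs_zero]
      linarith
  exact false_of_side_lt hx hy (abs_le.2 ⟨ha₁, ha₃⟩) (abs_le.2 ⟨hb₁, hb₃⟩) (abs_le.2 ⟨hc₁, hc₃⟩)
    (abs_le.2 ⟨ha₂, ha₄⟩) (abs_le.2 ⟨hb₂, hb₄⟩) (abs_le.2 ⟨hc₂, hc₄⟩)
    (side' (by linarith) (by linarith) (by linarith))
    (side' (by linarith) (by linarith) (by linarith))
    (side' (by linarith) (by linarith) (by linarith))
end

section
/- For every α ∈ (0,1] and every β ∈ [-α, 1-α], at least one of the following holds: (i) the straight line through the points (5/2, 5α/2) and (0, -5α/2 - 5β/2) intersects the segment from (-1,-1) to (1,-1); or (ii) the straight line through the points (-5/2, 5β/2) and (0, -5α/2 - 5β/2) intersects the segment from (-1,-1) to (-1,1). -/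
theorem covering_assertion_subcase_one_one
    (α β : ℝ) (hα : α ∈ Set.Ioc (0 : ℝ) 1) (hβ : β ∈ Set.Icc (-α) (1 - α)) :
    ((affineSpan ℝ {((5 / 2 : ℝ), 5 * α / 2), ((0 : ℝ), -5 * α / 2 - 5 * β / 2)} : Set (ℝ × ℝ))
        ∩ segment ℝ ((-1, -1) : ℝ × ℝ) (1, -1)).Nonempty ∨
    ((affineSpan ℝ {((-5 / 2 : ℝ), 5 * β / 2), ((0 : ℝ), -5 * α / 2 - 5 * β / 2)} : Set (ℝ × ℝ))
        ∩ segment ℝ ((-1, -1) : ℝ × ℝ) (-1, 1)).Nonempty := by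
  obtain ⟨hα0, hα1⟩ := hα
  obtain ⟨hβ0, hβ1⟩ := hβ
  by_cases h : 3 * α + β ≤ 2
  · right
    refine ⟨(-1, -(3 * α + β) / 2), ?_, ?_⟩
    · rw [SetLike.mem_coe]
      convert AffineMap.lineMap_mem_affineSpan_pair (3 / 5 : ℝ)
        ((-5 / 2 : ℝ), 5 * β / 2) ((0 : ℝ), -5 * α / 2 - 5 * β / 2) using 1
      ext <;> simp [AffineMap.lineMap_apply] <;> ring
    · refine ⟨1 - (2 - (3 * α + β)) / 4, (2 - (3 * α + β)) / 4, by linarith, by linarith,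
        by ring, ?_⟩
      ext <;> simp <;> ring
  · left
    push Not at h
    have hs : 0 < 2 * α + β := by linarith
    obtain ⟨x, hx⟩ : ∃ x : ℝ, (2 * α + β) * x = 5 * (α + β) / 2 - 1 :=
      ⟨(5 * (α + β) / 2 - 1) / (2 * α + β), by field_simp⟩
    have hx0 : -1 ≤ x := le_of_mul_le_mul_left (by linarith) hs
    have hx1 : x ≤ 1 := le_of_mul_le_mul_left (by linarith) hs
    refine ⟨(x, -1), ?_, ?_⟩
    · rw [SetLike.mem_coe]
      convert AffineMap.lineMap_mem_affineSpan_pair (1 - 2 * x / 5 : ℝ)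
        ((5 / 2 : ℝ), 5 * α / 2) ((0 : ℝ), -5 * α / 2 - 5 * β / 2) using 1
      ext <;> simp [AffineMap.lineMap_apply] <;> linarith
    · refine ⟨(1 - x) / 2, (1 + x) / 2, by linarith, by linarith, by ring, ?_⟩
      ext <;> simp <;> ring
end
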